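/- Case 5 of the meeting-point analysis: in a rooted tree, assume dist(v,q) ≤ dist(u,q), q is not an ancestor of u, u is not an ancestor of q, the lowest common ancestor of v and q is an ancestor of u, and the lowest common ancestor of u and v is not an ancestor of q. Then the median of u, v, q equals the lowest common ancestor of u and v. -/

import Mathlib

/-- `m` lies on the path from `a` to `b` in the graph `G`. -/
def onPath {V : Type*} (G : SimpleGraph V) (a m b : V) : Prop :=
  G.dist a m + G.dist m b = G.dist a b

/-- `m` is a median of the vertices `u`, `v`, `w`: it lies on the path from `u` to `v`,
on the path from `u` to `w`, and on the path from `v` to `w`. -/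
def isMedian {V : Type*} (G : SimpleGraph V) (m u v w : V) : Prop :=
  onPath G u m v ∧ onPath G u m w ∧ onPath G v m w

/-- `u` is an ancestor of `v` with respect to the root `r`:
`u` lies on the path from `r` to `v`. -/
def isAncestor {V : Type*} (G : SimpleGraph V) (r u v : V) : Prop :=
  onPath G r u v

/-- `l` is a lowest common ancestor of `u` and `v` with respect to the root `r`. -/
def isLCA {V : Type*} (G : SimpleGraph V) (r l u v : V) : Prop :=
  isAncestor G r l u ∧ isAncestor G r l v ∧
    ∀ a : V, isAncestor G r a u → isAncestor G r a v → isAncestor G r a l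

/-!
In a tree, each vertex of the path from `a` to `b` lies on the path from `a` to `c` or on the path
from `c` to `b`, for every vertex `c`. A lowest common ancestor `l` of `u` and `v` is a median of
`r`, `u`, `v`. If `l` is not on the path from `r` to `q`, splitting the paths from `r` to `u` and
from `r` to `v` at `q` puts `l` on the paths from `q` to `u` and to `v`. Hence `l` is also a median
of `u`, `v`, `q`, and medians in a tree are unique.
-/

section

variable {V : Type*} {G : SimpleGraph V} {a b c d m n r l u v w q : V}

theorem onPath_of_mem_support {p : G.Walk a b} (hp : p.length = G.dist a b)
    (hm : m ∈ p.support) : onPath G a m b := by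
  obtain ⟨p₁, p₂, rfl⟩ := SimpleGraph.Walk.mem_support_iff_exists_append.mp hm
  rw [SimpleGraph.Walk.length_append] at hp
  have h₁ := SimpleGraph.dist_le p₁
  have h₂ := SimpleGraph.dist_le p₂
  have htri := p₁.reachable.dist_triangle_left b
  unfold onPath
  omega

theorem exists_adj_and_onPath (hr : G.Reachable a b) (hab : a ≠ b) :
    ∃ x, G.Adj a x ∧ onPath G a x b := by
  obtain ⟨p, hp⟩ := hr.exists_walk_length_eq_dist
  obtain ⟨x, hadj, p', rfl⟩ := p.exists_eq_cons_of_ne hab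
  exact ⟨x, hadj, onPath_of_mem_support hp (List.mem_cons_of_mem _ p'.start_mem_support)⟩

theorem onPath_or_onPath_of_adj (hG : G.IsTree) (hab : G.Adj a b) (c : V) :
    onPath G a b c ∨ onPath G b a c := by
  have hdist := hG.dist_eq_dist_add_one_of_adj c hab
  have hone : G.dist a b = 1 := SimpleGraph.dist_eq_one_iff_adj.mpr hab
  unfold onPath
  rw [G.dist_comm (u := b) (v := a), hone, G.dist_comm (u := a), G.dist_comm (u := b)]
  omega

namespace onPath

theorem symm (h : onPath G a m b) : onPath G b m a := by
  unfold onPath at *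
  rw [G.dist_comm (u := b) (v := m), G.dist_comm (u := m) (v := a),
    G.dist_comm (u := b) (v := a), add_comm, h]

theorem trans_left (hG : G.Connected) (hc : onPath G a c d) (hb : onPath G a b c) :
    onPath G a b d := by
  have h₁ := hG.dist_triangle (u := b) (v := c) (w := d)
  have h₂ := hG.dist_triangle (u := a) (v := b) (w := d)
  unfold onPath at *
  omega

theorem trans_left_right (hG : G.Connected) (hc : onPath G a c d) (hb : onPath G a b c) :
    onPath G b c d := by
  have h₁ := hG.dist_triangle (u := b) (v := c) (w := d)
  have h₂ := hG.dist_triangle (u := a) (v := b) (w := d)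
  unfold onPath at *
  omega

theorem antisymm (hG : G.Connected) (hm : onPath G a m n) (hn : onPath G a n m) : m = n := by
  rw [← hG.dist_eq_zero_iff]
  unfold onPath at *
  omega

theorem mem_support (hG : G.IsTree) (h : onPath G a m b) (p : G.Walk a b) : m ∈ p.support := by
  classical
  obtain ⟨p₁, hp₁⟩ := hG.connected.exists_walk_length_eq_dist a m
  obtain ⟨p₂, hp₂⟩ := hG.connected.exists_walk_length_eq_dist m b
  have hgeod : (p₁.append p₂).IsPath := by
    apply SimpleGraph.Walk.isPath_of_length_eq_dist
    rw [SimpleGraph.Walk.length_append, hp₁, hp₂, h]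
  have hbypass : p.bypass = p₁.append p₂ :=
    (hG.existsUnique_path a b).unique p.bypass_isPath hgeod
  apply p.support_bypass_subset_support
  rw [hbypass, SimpleGraph.Walk.mem_support_append_iff]
  exact Or.inl p₁.end_mem_support

theorem left_or_right (hG : G.IsTree) (h : onPath G a m b) (c : V) :
    onPath G a m c ∨ onPath G c m b := by
  obtain ⟨p, hp⟩ := hG.connected.exists_walk_length_eq_dist a c
  obtain ⟨p', hp'⟩ := hG.connected.exists_walk_length_eq_dist c b
  have hm : m ∈ p.support ∨ m ∈ p'.support := by
    rw [← SimpleGraph.Walk.mem_support_append_iff]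
    exact h.mem_support hG (p.append p')
  exact hm.imp (onPath_of_mem_support hp) (onPath_of_mem_support hp')

theorem eq_of_dist_eq (hG : G.IsTree) (hm : onPath G a m b) (hn : onPath G a n b)
    (hdist : G.dist a m = G.dist a n) : m = n := by
  rw [← hG.connected.dist_eq_zero_iff]
  rcases hm.left_or_right hG n with h | h
  · unfold onPath at h
    omega
  · have hcomm := G.dist_comm (u := n) (v := m)
    unfold onPath at *
    omega

end onPath

namespace isMedian

theorem unique (hG : G.IsTree) (hm : isMedian G m u v w) (hn : isMedian G n u v w) : m = n := by
  -- Any median is at distance `(dist u v + dist u w - dist v w) / 2` from `u`.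
  have hdist : G.dist u m = G.dist u n := by
    obtain ⟨muv, muw, mvw⟩ := hm
    obtain ⟨nuv, nuw, nvw⟩ := hn
    have hmv := G.dist_comm (u := m) (v := v)
    have hnv := G.dist_comm (u := n) (v := v)
    unfold onPath at *
    omega
  exact hm.1.eq_of_dist_eq hG hn.1 hdist

theorem replace_of_not_onPath (hG : G.IsTree) (hm : isMedian G m r u v)
    (hq : ¬ onPath G r m q) : isMedian G m u v q :=
  have ⟨hru, hrv, huv⟩ := hm
  ⟨huv, ((hru.left_or_right hG q).resolve_left hq).symm,
    ((hrv.left_or_right hG q).resolve_left hq).symm⟩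

end isMedian

-- If `l ≠ u`, the neighbour `x` of `l` towards `u` is too low to be an ancestor of `v`, so the
-- path from `v` to `u` reaches `x` through `l`.
theorem onPath_of_isLCA (hG : G.IsTree) (h : isLCA G r l u v) : onPath G v l u := by
  obtain ⟨hlu, hlv, hmax⟩ := h
  by_cases hne : l = u
  · simp only [hne, onPath, SimpleGraph.dist_self, add_zero]
  obtain ⟨x, hadj, hlxu⟩ := exists_adj_and_onPath (hG.connected l u) hne
  have hxu : isAncestor G r x u := (hlu.symm.trans_left hG.connected hlxu.symm).symm
  have hrlx : onPath G r l x := (hlu.symm.trans_left_right hG.connected hlxu.symm).symm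
  have hxv : ¬ isAncestor G r x v := fun hxv =>
    hadj.ne (hrlx.antisymm hG.connected (hmax x hxu hxv))
  have hlxv : ¬ onPath G l x v := fun hlxv =>
    hxv (hlv.symm.trans_left hG.connected hlxv.symm).symm
  have hvxu : onPath G v x u := (hlxu.left_or_right hG v).resolve_left hlxv
  have hxlv : onPath G x l v := (onPath_or_onPath_of_adj hG hadj v).resolve_left hlxv
  exact hvxu.trans_left hG.connected hxlv.symm

theorem isMedian_of_isLCA (hG : G.IsTree) (h : isLCA G r l u v) : isMedian G l r u v :=
  ⟨h.1, h.2.1, (onPath_of_isLCA hG h).symm⟩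

theorem median_case5_general (hG : G.IsTree) (hl : isLCA G r l u v)
    (hlq : ¬ isAncestor G r l q) : isMedian G m u v q ↔ m = l := by
  have hmed : isMedian G l u v q := (isMedian_of_isLCA hG hl).replace_of_not_onPath hG hlq
  exact ⟨fun hm => hm.unique hG hmed, fun h => h ▸ hmed⟩

end

/-- Case 5: if `dist(v,q) ≤ dist(u,q)`, `q` is not an ancestor of `u`, `u` is
not an ancestor of `q`, the LCA of `v` and `q` is an ancestor of `u`, and the
LCA of `u` and `v` is not an ancestor of `q`, then the median of `u`, `v`, `q`
equals the LCA of `u` and `v`. -/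
theorem median_case5 {V : Type*} [Fintype V] (G : SimpleGraph V)
    (hG : G.IsTree) (r u v q : V)
    (hd : G.dist v q ≤ G.dist u q)
    (hqu : ¬ isAncestor G r q u) (huq : ¬ isAncestor G r u q)
    (l1 : V) (hl1 : isLCA G r l1 v q) (hl1u : isAncestor G r l1 u)
    (l2 : V) (hl2 : isLCA G r l2 u v) (hl2q : ¬ isAncestor G r l2 q) :
    ∀ m : V, isMedian G m u v q → m = l2 :=
  fun _ => (median_case5_general hG hl2 hl2q).mp
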